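/- Let G be a graph and H an attachment set of even size h. Then η(G) ≤ η(altan(G,H)) ≤ η(G) + 2, i.e., the nullity of the altan exceeds the nullity of the parent by 0, 1 or 2. -/

import Mathlib

open scoped Classical

/-- The nullity of a graph: dimension of the kernel of its real adjacency matrix. -/
noncomputable def nullity {V : Type*} [Fintype V] (G : SimpleGraph V) : ℕ :=
  letI := Classical.decEq V
  letI := Classical.decRel G.Adj
  Module.finrank ℝ ↥(LinearMap.ker (Matrix.toLin' (G.adjMatrix ℝ)))

/-- `q` is a kernel eigenvector of `G`: the sum of `q` over each neighbourhood is `0`. -/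
def IsKernelVector {V : Type*} [Fintype V] (G : SimpleGraph V) (q : V → ℝ) : Prop :=
  ∀ v : V, ∑ u : V, (if G.Adj v u then q u else 0) = 0

/-- Underlying relation of the altan construction: vertices are `V ⊕ (Fin h ⊕ Fin h)`,
where `Sum.inr (Sum.inl i)` is `x_{i+1}` and `Sum.inr (Sum.inr i)` is `y_{i+1}`
(0-indexed versions of the 1-indexed `x_i, y_i`). -/
def altanRel {V : Type*} {h : ℕ} [NeZero h] (G : SimpleGraph V) (H : Fin h → V) :
    (V ⊕ (Fin h ⊕ Fin h)) → (V ⊕ (Fin h ⊕ Fin h)) → Prop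
  | Sum.inl u, Sum.inl w => G.Adj u w
  | Sum.inl u, Sum.inr (Sum.inl i) => u = H i
  | Sum.inr (Sum.inl i), Sum.inr (Sum.inr j) => j = i ∨ i = j + 1
  | _, _ => False

/-- The altan of `(G, H)`. -/
def altan {V : Type*} {h : ℕ} [NeZero h] (G : SimpleGraph V) (H : Fin h → V) :
    SimpleGraph (V ⊕ (Fin h ⊕ Fin h)) :=
  SimpleGraph.fromRel (altanRel G H)

/-- The special vector: `s(y_i) = (-1)^i` (1-indexed), `0` elsewhere. -/
def specialVector (V : Type*) (h : ℕ) : (V ⊕ (Fin h ⊕ Fin h)) → ℝ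
  | Sum.inr (Sum.inr j) => (-1 : ℝ) ^ ((j : ℕ) + 1)
  | _ => 0

/-- The induced attachment set `H' = (y_1, ..., y_h)` of the altan. -/
def inducedAttachment (V : Type*) (h : ℕ) : Fin h → (V ⊕ (Fin h ⊕ Fin h)) :=
  fun i => Sum.inr (Sum.inr i)

/-- The kernel as a submodule. -/
lemma mem_ker_adj {V : Type*} [Fintype V] (G : SimpleGraph V) (i1 : DecidableEq V)
    (i2 : DecidableRel G.Adj) (q : V → ℝ) :
    q ∈ LinearMap.ker (Matrix.toLin' (G.adjMatrix ℝ)) ↔ IsKernelVector G q := by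
  rw [LinearMap.mem_ker, Matrix.toLin'_apply, funext_iff]
  unfold IsKernelVector
  refine forall_congr' fun v => ?_
  simp only [Matrix.mulVec, dotProduct, SimpleGraph.adjMatrix_apply, Pi.zero_apply, ite_mul,
    one_mul, zero_mul]
  refine Eq.congr (Finset.sum_congr rfl fun u _ => ?_) rfl
  congr

/-- The kernel vectors as a submodule. -/
noncomputable def kerSub {V : Type*} [Fintype V] (G : SimpleGraph V) : Submodule ℝ (V → ℝ) :=
  letI := Classical.decEq V
  letI := Classical.decRel G.Adj
  LinearMap.ker (Matrix.toLin' (G.adjMatrix ℝ))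

lemma mem_kerSub {V : Type*} [Fintype V] (G : SimpleGraph V) (q : V → ℝ) :
    q ∈ kerSub G ↔ IsKernelVector G q := mem_ker_adj G _ _ q

lemma nullity_eq {V : Type*} [Fintype V] (G : SimpleGraph V) :
    nullity G = Module.finrank ℝ (kerSub G) := rfl

lemma kernel_altan_iff {V : Type*} [Fintype V] {h : ℕ} [NeZero h]
    (G : SimpleGraph V) (H : Fin h → V) (p : V ⊕ (Fin h ⊕ Fin h) → ℝ) :
    IsKernelVector (altan G H) p ↔
      (∀ v, ∑ u, (if G.Adj v u then p (Sum.inl u) else 0) +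
        ∑ i, (if v = H i then p (Sum.inr (Sum.inl i)) else 0) = 0) ∧
      (∀ i, p (Sum.inl (H i)) +
        ∑ j, (if j = i ∨ i = j + 1 then p (Sum.inr (Sum.inr j)) else 0) = 0) ∧
      (∀ j, ∑ i, (if j = i ∨ i = j + 1 then p (Sum.inr (Sum.inl i)) else 0) = 0) := by
  have key : ∀ v u, (altan G H).Adj v u ↔ v ≠ u ∧ (altanRel G H v u ∨ altanRel G H u v) :=
    fun v u => SimpleGraph.fromRel_adj _ _ _
  have e0 : ∀ v u, (v ≠ u ∧ (G.Adj v u ∨ G.Adj u v)) ↔ G.Adj v u := fun v u =>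
    ⟨fun hx => hx.2.elim id (fun k => k.symm), fun k => ⟨k.ne, Or.inl k⟩⟩
  unfold IsKernelVector
  simp only [Sum.forall, Fintype.sum_sum_type, key, altanRel, ne_eq, Sum.inl.injEq,
    Sum.inr.injEq, reduceCtorEq, not_false_eq_true, true_and, or_false, false_or,
    and_false, if_false, Finset.sum_const_zero, add_zero, zero_add, Finset.sum_ite_eq',
    Finset.mem_univ, if_true]
  simp only [← ne_eq, e0]

lemma cyc_zero {h : ℕ} [NeZero h] (b : Fin h → ℝ) (h0 : b 0 = 0)
    (hb : ∀ j, b (j + 1) + b j = 0) : b = 0 := by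
  have : ∀ n (hn : n < h), b ⟨n, hn⟩ = 0 := by
    intro n
    induction n with
    | zero => intro hn; exact h0
    | succ n ih =>
      intro hn
      have h1 := hb ⟨n, by omega⟩
      have h2 : (⟨n, by omega⟩ : Fin h) + 1 = ⟨n + 1, hn⟩ := by
        apply Fin.ext
        rw [Fin.val_add, Fin.coe_ofNat_eq_mod, Nat.mod_eq_of_lt (a := 1) (by omega)]
        exact Nat.mod_eq_of_lt hn
      rw [h2, ih] at h1
      simpa using h1
  funext j
  exact this j.1 j.2

lemma succ_ne {h : ℕ} [NeZero h] (hh : 2 ≤ h) (j : Fin h) : j + 1 ≠ j := by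
  intro hj
  have := congrArg Fin.val hj
  rw [Fin.val_add, Fin.coe_ofNat_eq_mod, Nat.mod_eq_of_lt (a := 1) (by omega)] at this
  have hlt := j.2
  rcases Nat.lt_or_ge (j.1 + 1) h with hl | hl
  · rw [Nat.mod_eq_of_lt hl] at this; omega
  · have : j.1 + 1 = h := by omega
    simp_all

lemma succ_inj {h : ℕ} [NeZero h] (i j : Fin h) : i + 1 = j + 1 ↔ i = j := by
  open Fin.CommRing in
  exact add_left_inj (G := Fin h) 1

lemma pair_sum {h : ℕ} (f : Fin h → ℝ) {i j : Fin h} (hij : i ≠ j) :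
    ∑ k, (if k = i ∨ k = j then f k else 0) = f i + f j := by
  rw [← Finset.sum_pair hij, ← Finset.sum_filter]
  congr 1
  ext k
  simp

/-- for even attachment size, η(G) ≤ η(altan(G,H)) ≤ η(G) + 2. -/
theorem stmt4 {V : Type*} [Fintype V] {h : ℕ} [NeZero h] (hh : 2 ≤ h) (heven : Even h)
    (G : SimpleGraph V) (H : Fin h → V) :
    nullity G ≤ nullity (altan G H) ∧ nullity (altan G H) ≤ nullity G + 2 := by
  rw [nullity_eq, nullity_eq]
  constructor
  · let g : (kerSub G × (Fin h → ℝ)) →ₗ[ℝ] (Fin h → ℝ) :=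
      { toFun := fun z i => z.1.1 (H i) + ∑ j, (if j = i ∨ i = j + 1 then z.2 j else 0)
        map_add' := by
          intro z w
          funext i
          have : ∀ j, (if j = i ∨ i = j + 1 then z.2 j + w.2 j else 0) =
            (if j = i ∨ i = j + 1 then z.2 j else 0) +
              (if j = i ∨ i = j + 1 then w.2 j else 0) := by
            intro j; split_ifs <;> simp
          simp only [Prod.fst_add, Prod.snd_add, this, Finset.sum_add_distrib, Pi.add_apply,
            Submodule.coe_add]
          ring
        map_smul' := by
          intro c z
          funext i
          have : ∀ j, (if j = i ∨ i = j + 1 then c * z.2 j else 0) =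
            c * (if j = i ∨ i = j + 1 then z.2 j else 0) := by
            intro j; split_ifs <;> simp
          simp only [Prod.smul_fst, Prod.smul_snd, this, ← Finset.mul_sum, Pi.smul_apply,
            Submodule.coe_smul, RingHom.id_apply, smul_eq_mul]
          ring }
    have hrn := LinearMap.finrank_range_add_finrank_ker g
    have hr : Module.finrank ℝ (LinearMap.range g) ≤ h := by
      simpa using Submodule.finrank_le (LinearMap.range g)
    have hd : Module.finrank ℝ (kerSub G × (Fin h → ℝ)) = Module.finrank ℝ (kerSub G) + h := by
      simp
    let φ : LinearMap.ker g →ₗ[ℝ] kerSub (altan G H) :=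
      { toFun := fun z => ⟨Sum.elim z.1.1.1 (Sum.elim 0 z.1.2), by
          rw [mem_kerSub, kernel_altan_iff]
          refine ⟨fun v => ?_, fun i => ?_, fun j => ?_⟩
          · simpa using (mem_kerSub G _).1 z.1.1.2 v
          · exact congrFun (LinearMap.mem_ker.1 z.2) i
          · simp⟩
        map_add' := by
          intro z w
          apply Subtype.ext
          funext k
          rcases k with k | k | k <;> simp
        map_smul' := by
          intro c z
          apply Subtype.ext
          funext k
          rcases k with k | k | k <;> simp }
    have hφ : Function.Injective φ := by
      intro z w hzw
      have h1 : (Sum.elim z.1.1.1 (Sum.elim 0 z.1.2) : V ⊕ (Fin h ⊕ Fin h) → ℝ) =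
        Sum.elim w.1.1.1 (Sum.elim 0 w.1.2) := congrArg Subtype.val hzw
      apply Subtype.ext
      refine Prod.ext (Subtype.ext ?_) ?_
      · funext v; exact congrFun h1 (Sum.inl v)
      · funext j; exact congrFun h1 (Sum.inr (Sum.inr j))
    have := LinearMap.finrank_le_finrank_of_injective hφ
    omega
  · let f : kerSub (altan G H) →ₗ[ℝ] (ℝ × ℝ) :=
      ((LinearMap.proj (Sum.inr (Sum.inl 0))).prod (LinearMap.proj (Sum.inr (Sum.inr 0)))) ∘ₗ
        (kerSub (altan G H)).subtype
    have hrn := LinearMap.finrank_range_add_finrank_ker f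
    have hr : Module.finrank ℝ (LinearMap.range f) ≤ 2 := by
      simpa using Submodule.finrank_le (LinearMap.range f)
    have hz : ∀ z : LinearMap.ker f, z.1.1 (Sum.inr (Sum.inl 0)) = 0 ∧
        z.1.1 (Sum.inr (Sum.inr 0)) = 0 := fun z => by
      have := LinearMap.mem_ker.1 z.2
      exact ⟨congrArg Prod.fst this, congrArg Prod.snd this⟩
    have ha : ∀ z : LinearMap.ker f, (fun i => z.1.1 (Sum.inr (Sum.inl i))) = 0 := by
      intro z
      refine cyc_zero _ (hz z).1 fun j => ?_
      have := ((kernel_altan_iff G H _).1 ((mem_kerSub _ _).1 z.1.2)).2.2 j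
      simp only [eq_comm (a := j)] at this
      rw [pair_sum (fun i => z.1.1 (Sum.inr (Sum.inl i))) (succ_ne hh j).symm] at this
      linarith
    let ψ : LinearMap.ker f →ₗ[ℝ] kerSub G :=
      { toFun := fun z => ⟨fun v => z.1.1 (Sum.inl v), by
          rw [mem_kerSub]
          intro v
          have := ((kernel_altan_iff G H _).1 ((mem_kerSub _ _).1 z.1.2)).1 v
          have h2 : ∀ i, z.1.1 (Sum.inr (Sum.inl i)) = 0 := fun i => congrFun (ha z) i
          simpa [h2] using this⟩
        map_add' := fun z w => rfl
        map_smul' := fun c z => rfl }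
    have hψ : Function.Injective ψ := by
      intro z₁ z₂ hz12
      rw [← sub_eq_zero]
      have hq : ∀ v, (z₁ - z₂).1.1 (Sum.inl v) = 0 := fun v =>
        sub_eq_zero.2 (congrFun (congrArg Subtype.val hz12) v)
      generalize z₁ - z₂ = z at hq ⊢
      have hb : (fun i => z.1.1 (Sum.inr (Sum.inr i))) = 0 := by
        refine cyc_zero _ (hz z).2 fun j => ?_
        have := ((kernel_altan_iff G H _).1 ((mem_kerSub _ _).1 z.1.2)).2.1 (j + 1)
        simp only [succ_inj, eq_comm (a := j), hq, zero_add] at this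
        rw [pair_sum (fun i => z.1.1 (Sum.inr (Sum.inr i))) (succ_ne hh j)] at this
        exact this
      apply Subtype.ext
      apply Subtype.ext
      funext k
      rcases k with k | k | k
      · exact hq k
      · exact congrFun (ha z) k
      · exact congrFun hb k
    have := LinearMap.finrank_le_finrank_of_injective hψ
    omega
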